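/- arXiv:1703.05531 — 3 statements merged into one kernel-verified Lean document; each statement's English description precedes it below -/
import Mathlib

section
/- Let A be a finite or infinite matrix (of size u×v with u,v ∈ ℕ ∪ {ω}) with entries from ℚ, each row having only finitely many nonzero entries. If A is image partition regular, then I(A) is a left ideal of the semigroup (βℕ,·); that is, I(A) ≠ ∅ and for every p ∈ βℕ and every q ∈ I(A), p·q ∈ I(A). -/
/- `ℕ+` plays the role of the paper's `ℕ = {1,2,3,…}`.  `Ultrafilter ℕ+` is `βℕ`. -/

/-- Product of ultrafilters: `U ∈ umul p q ↔ {x | {y | x*y ∈ U} ∈ q} ∈ p`. -/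
def umul (p q : Ultrafilter ℕ+) : Ultrafilter ℕ+ :=
  p.bind fun x => q.map fun y => x * y

/-- Sum of ultrafilters: `U ∈ uadd p q ↔ {x | {y | x+y ∈ U} ∈ q} ∈ p`. -/
def uadd (p q : Ultrafilter ℕ+) : Ultrafilter ℕ+ :=
  p.bind fun x => q.map fun y => x + y

/-- The matrix-vector product `Ax` (computed in `ℚ`) of a row-finite matrix `A`
with a vector `x` of positive integers. -/
noncomputable def mulVecQ {ι κ : Type} (A : ι → κ → ℚ) (x : κ → ℕ+) : ι → ℚ :=
  fun i => ∑ᶠ j, A i j * ((x j : ℕ) : ℚ)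

/-- All entries of the vector `y` are (positive) natural numbers lying in `P`. -/
def entriesIn {ι : Type} (y : ι → ℚ) (P : Set ℕ+) : Prop :=
  ∀ i, ∃ n ∈ P, y i = ((n : ℕ) : ℚ)

/-- `A` is image partition regular: for every finite coloring of `ℕ` there is
a vector `x` over `ℕ` all entries of whose image `Ax` are monochromatic. -/
def IPR {ι κ : Type} (A : ι → κ → ℚ) : Prop :=
  ∀ (r : ℕ) (c : ℕ+ → Fin r), ∃ (k : Fin r) (x : κ → ℕ+),
    entriesIn (mulVecQ A x) {n | c n = k}

/-- `I(A) = {p ∈ βℕ : for every P ∈ p there is x over ℕ with all entries of Ax in P}`. -/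
def ISet {ι κ : Type} (A : ι → κ → ℚ) : Set (Ultrafilter ℕ+) :=
  {p | ∀ P ∈ p, ∃ x : κ → ℕ+, entriesIn (mulVecQ A x) P}

/-! If every ultrafilter `p` had a member `P p` outside an upward closed family `𝒢`, compactness of
the space of ultrafilters would yield finitely many such sets covering the whole space; colouring
each point by one of the sets containing it contradicts the partition regularity of `𝒢`. Applied to
the sets that contain an image of `A`, this makes `I(A)` nonempty. For the ideal property,
`A (a • x) = a • A x` shows that `I(A)` is stable under multiplication by positive integers, and
`p · q` is the `p`-limit of the ultrafilters `a · q`. -/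

section PartitionRegularity

variable {α : Type*} {𝒢 : Set (Set α)}

/-- A family `𝒢` of sets is partition regular if every finite colouring has a colour class in `𝒢`.
For an upward closed `𝒢` this says that some colour class contains a configuration of the kind
that `𝒢` encodes. -/
def IsPartitionRegular (𝒢 : Set (Set α)) : Prop :=
  ∀ (r : ℕ) (c : α → Fin r), ∃ k, c ⁻¹' {k} ∈ 𝒢

theorem IsPartitionRegular.exists_mem_of_iUnion_eq_univ (h𝒢 : IsPartitionRegular 𝒢)
    (hup : IsUpperSet 𝒢) {σ : Type*} [Finite σ] (P : σ → Set α) (hP : ⋃ s, P s = Set.univ) :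
    ∃ s, P s ∈ 𝒢 := by
  choose c hc using Set.iUnion_eq_univ_iff.mp hP
  obtain ⟨r, ⟨e⟩⟩ := Finite.exists_equiv_fin σ
  obtain ⟨k, hk⟩ := h𝒢 r (e ∘ c)
  refine ⟨e.symm k, hup ?_ hk⟩
  rintro n rfl
  simpa only [Function.comp_apply, Equiv.symm_apply_apply] using hc n

theorem IsPartitionRegular.exists_ultrafilter (h𝒢 : IsPartitionRegular 𝒢) (hup : IsUpperSet 𝒢) :
    ∃ p : Ultrafilter α, ∀ P ∈ p, P ∈ 𝒢 := by
  by_contra! hbad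
  choose P hPp hP𝒢 using hbad
  obtain ⟨t, ht⟩ := CompactSpace.elim_nhds_subcover (fun p => {q : Ultrafilter α | P p ∈ q})
    fun p => (ultrafilter_isOpen_basic (P p)).mem_nhds (hPp p)
  have hcover : ⋃ p : t, P p = Set.univ := by
    refine Set.iUnion_eq_univ_iff.mpr fun n => ?_
    have hn : (pure n : Ultrafilter α) ∈ ⋃ p ∈ t, {q : Ultrafilter α | P p ∈ q} :=
      ht ▸ Set.mem_univ _
    obtain ⟨p, hpt, hnp⟩ := Set.mem_iUnion₂.mp hn
    exact ⟨⟨p, hpt⟩, Ultrafilter.mem_pure.mp hnp⟩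
  obtain ⟨p, hp⟩ := h𝒢.exists_mem_of_iUnion_eq_univ hup _ hcover
  exact hP𝒢 p hp

end PartitionRegularity

section Images

variable {ι κ : Type} {A : ι → κ → ℚ}

theorem mulVecQ_smul (A : ι → κ → ℚ) (a : ℕ+) (x : κ → ℕ+) :
    mulVecQ A (a • x) = ((a : ℕ) : ℚ) • mulVecQ A x := by
  ext i
  simp only [mulVecQ, Pi.smul_apply, smul_eq_mul, PNat.mul_coe, Nat.cast_mul, mul_finsum,
    mul_left_comm]

theorem entriesIn.mono {y : ι → ℚ} {P Q : Set ℕ+} (hy : entriesIn y P) (hPQ : P ⊆ Q) :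
    entriesIn y Q := fun i =>
  let ⟨n, hn, hyn⟩ := hy i
  ⟨n, hPQ hn, hyn⟩

theorem entriesIn.smul {y : ι → ℚ} {P : Set ℕ+} {a : ℕ+} (hy : entriesIn y ((a * ·) ⁻¹' P)) :
    entriesIn (((a : ℕ) : ℚ) • y) P := fun i => by
  obtain ⟨n, hn, hyn⟩ := hy i
  exact ⟨a * n, hn, by rw [Pi.smul_apply, hyn, smul_eq_mul, PNat.mul_coe, Nat.cast_mul]⟩

/-- The sets of positive integers that contain all entries of some image `Ax`. By definition, `A`
is image partition regular when this family is partition regular, and `ISet A` consists of the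
ultrafilters all of whose members belong to it. -/
def imageSets (A : ι → κ → ℚ) : Set (Set ℕ+) :=
  {P | ∃ x : κ → ℕ+, entriesIn (mulVecQ A x) P}

theorem isUpperSet_imageSets (A : ι → κ → ℚ) : IsUpperSet (imageSets A) :=
  fun _ _ hPQ ⟨x, hx⟩ => ⟨x, hx.mono hPQ⟩

theorem mem_imageSets_of_preimage_mul_mem {P : Set ℕ+} {a : ℕ+}
    (h : (a * ·) ⁻¹' P ∈ imageSets A) : P ∈ imageSets A :=
  let ⟨x, hx⟩ := h
  ⟨a • x, mulVecQ_smul A a x ▸ hx.smul⟩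

end Images

section ISet

variable {ι κ : Type} {A : ι → κ → ℚ}

theorem IPR.nonempty_ISet (hA : IPR A) : (ISet A).Nonempty :=
  IsPartitionRegular.exists_ultrafilter (𝒢 := imageSets A) hA (isUpperSet_imageSets A)

theorem map_mul_mem_ISet {q : Ultrafilter ℕ+} (hq : q ∈ ISet A) (a : ℕ+) :
    q.map (a * ·) ∈ ISet A :=
  fun _ hP => mem_imageSets_of_preimage_mul_mem (hq _ (Ultrafilter.mem_map.mp hP))

theorem bind_mem_ISet {α : Type*} (p : Ultrafilter α) {f : α → Ultrafilter ℕ+}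
    (hf : ∀ a, f a ∈ ISet A) : p.bind f ∈ ISet A := fun P hP =>
  have ⟨a, ha⟩ := p.nonempty_of_mem (s := {a | P ∈ f a}) hP
  hf a P ha

theorem umul_mem_ISet (p : Ultrafilter ℕ+) {q : Ultrafilter ℕ+} (hq : q ∈ ISet A) :
    umul p q ∈ ISet A :=
  bind_mem_ISet p (map_mul_mem_ISet hq)

end ISet

/-- Lemma 2.3(a): if the (finite or infinite) row-finite matrix `A`
with rational entries is image partition regular, then `I(A)` is a left ideal of
`(βℕ,·)`: it is nonempty and `p·q ∈ I(A)` whenever `p ∈ βℕ` and `q ∈ I(A)`. -/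
theorem stmt_0 {ι κ : Type} (A : ι → κ → ℚ)
    (hrow : ∀ i, {j | A i j ≠ 0}.Finite) (hA : IPR A) :
    (ISet A).Nonempty ∧
      ∀ (p : Ultrafilter ℕ+), ∀ q ∈ ISet A, umul p q ∈ ISet A :=
  ⟨hA.nonempty_ISet, fun p _ hq => umul_mem_ISet p hq⟩
end

section
/- Let A be a finite (u×v with u,v ∈ ℕ) kernel partition regular matrix with entries from ℚ. Then J(A) is a subsemigroup of (βℕ,+); that is, J(A) ≠ ∅ and for all p,q ∈ J(A), p+q ∈ J(A). -/
/-- `A` is kernel partition regular: for every finite coloring of `ℕ` there is a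
monochromatic vector `x` with `Ax = 0`. -/
def KPR {ι κ : Type} (A : ι → κ → ℚ) : Prop :=
  ∀ (r : ℕ) (c : ℕ+ → Fin r), ∃ (k : Fin r) (x : κ → ℕ+),
    (∀ j, c (x j) = k) ∧ ∀ i, ∑ᶠ j, A i j * ((x j : ℕ) : ℚ) = 0

/-- `J(A) = {p ∈ βℕ : for every P ∈ p there is x with all entries in P and Ax = 0}`. -/
def JSet {ι κ : Type} (A : ι → κ → ℚ) : Set (Ultrafilter ℕ+) :=
  {p | ∀ P ∈ p, ∃ x : κ → ℕ+,
    (∀ j, x j ∈ P) ∧ ∀ i, ∑ᶠ j, A i j * ((x j : ℕ) : ℚ) = 0}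

/-! Partition regularity says that in every finite cover of `ℕ` some member contains all entries of
a solution of `A x = 0`, so by compactness some ultrafilter has only such members.
For sums, `P ∈ p + q` yields a solution `x` in `{a | {b | a + b ∈ P} ∈ q}`. As `x` has finitely many
entries, the intersection of the sets `{b | x j + b ∈ P}` belongs to `q`, hence contains a solution
`y`, and `x + y` is a solution in `P`. -/

open Set

attribute [local instance] Ultrafilter.add

section PartitionRegular

variable {α : Type*} {𝓖 : Set (Set α)}

theorem exists_mem_of_sUnion_eq_univ_of_coloring (h𝓖 : IsUpperSet 𝓖)
    (hcolor : ∀ (r : ℕ) (c : α → Fin r), ∃ k, c ⁻¹' {k} ∈ 𝓖)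
    (T : Finset (Set α)) (hT : ⋃₀ (T : Set (Set α)) = univ) : ∃ P ∈ T, P ∈ 𝓖 := by
  have hcover : ∀ a, ∃ P : T, a ∈ P.1 := fun a => by
    simpa using sUnion_eq_univ_iff.mp hT a
  choose f hf using hcover
  obtain ⟨k, hk⟩ := hcolor _ (T.equivFin ∘ f)
  have hsub : T.equivFin ∘ f ⁻¹' {k} ⊆ (T.equivFin.symm k).1 := by
    rintro a rfl
    simpa using hf a
  exact ⟨_, (T.equivFin.symm k).2, h𝓖 hsub hk⟩

theorem exists_ultrafilter_forall_mem_of_cover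
    (hcover : ∀ T : Finset (Set α), ⋃₀ (T : Set (Set α)) = univ → ∃ P ∈ T, P ∈ 𝓖) :
    ∃ p : Ultrafilter α, ∀ P ∈ p, P ∈ 𝓖 := by
  classical
  obtain ⟨p, hp⟩ := Ultrafilter.exists_ultrafilter_of_finite_inter_nonempty {Q | Qᶜ ∉ 𝓖} <| by
    intro T hT
    by_contra hempty
    have hunion : ⋃₀ ((T.image compl : Finset (Set α)) : Set (Set α)) = univ := by
      rw [Finset.coe_image, ← compl_sInter, not_nonempty_iff_eq_empty.mp hempty, compl_empty]
    obtain ⟨P, hP, hgood⟩ := hcover _ hunion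
    obtain ⟨Q, hQ, rfl⟩ := Finset.mem_image.mp hP
    exact hT hQ hgood
  refine ⟨p, fun P hP => by_contra fun hbad => ?_⟩
  have hcompl : Pᶜ ∈ p := hp <| by rwa [mem_ofPred_eq, compl_compl]
  exact Ultrafilter.compl_mem_iff_notMem.mp hcompl hP

end PartitionRegular

/-- The ultrafilters each of whose members contains all the entries of some vector in `S`. For the
solution set of `A x = 0` this is `JSet A`. -/
def entryUltrafilters {κ α : Type*} (S : Set (κ → α)) : Set (Ultrafilter α) :=
  {p | ∀ P ∈ p, ∃ x : κ → α, (∀ j, x j ∈ P) ∧ x ∈ S}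

theorem entryUltrafilters_nonempty {κ α : Type*} {S : Set (κ → α)}
    (hS : ∀ (r : ℕ) (c : α → Fin r), ∃ k, ∃ x : κ → α, (∀ j, c (x j) = k) ∧ x ∈ S) :
    (entryUltrafilters S).Nonempty := by
  have hupper : IsUpperSet {P : Set α | ∃ x : κ → α, (∀ j, x j ∈ P) ∧ x ∈ S} :=
    fun _ _ hPQ ⟨x, hxP, hxS⟩ => ⟨x, fun j => hPQ (hxP j), hxS⟩
  exact exists_ultrafilter_forall_mem_of_cover <|
    exists_mem_of_sUnion_eq_univ_of_coloring hupper hS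

theorem add_mem_entryUltrafilters {κ M : Type*} [Finite κ] [Add M] (S : AddSubsemigroup (κ → M))
    {p q : Ultrafilter M} (hp : p ∈ entryUltrafilters (S : Set (κ → M)))
    (hq : q ∈ entryUltrafilters (S : Set (κ → M))) :
    p + q ∈ entryUltrafilters (S : Set (κ → M)) := by
  intro P hP
  have hP' : {a | {b | a + b ∈ P} ∈ q} ∈ p := (Ultrafilter.eventually_add p q (· ∈ P)).mp hP
  obtain ⟨x, hxP, hxS⟩ := hp _ hP'
  have hinter : (⋂ j, {b | x j + b ∈ P}) ∈ q := Filter.iInter_mem.mpr hxP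
  obtain ⟨y, hyP, hyS⟩ := hq _ hinter
  exact ⟨x + y, fun j => mem_iInter.mp (hyP j) j, S.add_mem hxS hyS⟩

theorem uadd_eq_add (p q : Ultrafilter ℕ+) : uadd p q = p + q := rfl

/-- The additive semigroup of positive integer vectors in the kernel of `A`. `Finite κ` ensures that
`∑ᶠ` takes no junk value. -/
def positiveKernel {ι κ : Type*} [Finite κ] (A : ι → κ → ℚ) : AddSubsemigroup (κ → ℕ+) where
  carrier := {x | ∀ i, ∑ᶠ j, A i j * ((x j : ℕ) : ℚ) = 0}
  add_mem' {x y} hx hy i := by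
    simp only [Pi.add_apply, PNat.add_coe, Nat.cast_add, mul_add]
    rw [finsum_add_distrib (toFinite _) (toFinite _), hx i, hy i, add_zero]

theorem jSet_eq_entryUltrafilters {ι κ : Type} [Finite κ] (A : ι → κ → ℚ) :
    JSet A = entryUltrafilters (positiveKernel A : Set (κ → ℕ+)) := rfl

theorem stmt_5_general {ι κ : Type} [Finite κ] (A : ι → κ → ℚ) (hA : KPR A) :
    (JSet A).Nonempty ∧ ∀ p ∈ JSet A, ∀ q ∈ JSet A, uadd p q ∈ JSet A := by
  simp only [jSet_eq_entryUltrafilters, uadd_eq_add]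
  exact ⟨entryUltrafilters_nonempty hA, fun _ hp _ hq => add_mem_entryUltrafilters _ hp hq⟩

/-- Lemma 2.7(b): if the finite `u×v` matrix `A` with rational
entries is kernel partition regular, then `J(A)` is a subsemigroup of `(βℕ,+)`. -/
theorem stmt_5 {u v : ℕ} (A : Fin u → Fin v → ℚ) (hA : KPR A) :
    (JSet A).Nonempty ∧ ∀ p ∈ JSet A, ∀ q ∈ JSet A, uadd p q ∈ JSet A :=
  stmt_5_general A hA
end

section
/- Let m ∈ ℕ, for each i ∈ {1,…,m} let A_i be a u_i×v_i image partition regular matrix with u_i, v_i ∈ ℕ, and let B be any infinite (ω×ω, row-finite) image partition regular matrix. Let ℱ be the set of all finite image partition regular matrices with rational entries and I = ⋂_{A ∈ ℱ} I(A). If U ∈ p^m·q where p ∈ I, q ∈ I(B), and p^m denotes the m-fold product of p in (βℕ,·), then there exist x^(i) ∈ ℕ^{v_i} for 1 ≤ i ≤ m and x^(m+1) ∈ ℕ^ω such that P(A_1x^(1), A_2x^(2), …, A_mx^(m), Bx^(m+1)) ⊆ U. -/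
/-- `upow p m` is the `m`-fold product `p·p·…·p` in `(βℕ,·)` (for `m ≥ 1`). -/
def upow (p : Ultrafilter ℕ+) : ℕ → Ultrafilter ℕ+
  | 0 => p
  | 1 => p
  | n + 2 => umul (upow p (n + 1)) p

/-!
If `U ∈ p · q` and the entries `n` of a vector all lie in `{x | x⁻¹U ∈ q} ∈ p`, then, there being
only finitely many of them, `⋂ n⁻¹U` still belongs to `q`, and any vector with all its entries in
this intersection completes the product. No such intersection is taken over the entries of the
rightmost factor, so `B` may have infinitely many rows.
-/

/-- The ultrafilter `p` represents the family `F` of rational vectors if every member of `p`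
contains all the entries of some vector of the family. Thus `p ∈ I(A)` says that `p` represents
`x ↦ Ax`; unlike `I(A)`, the notion also applies to the nonlinear families of products of entries
of several images. -/
def Represents {α ι : Type} (p : Ultrafilter ℕ+) (F : α → ι → ℚ) : Prop :=
  ∀ P ∈ p, ∃ a, entriesIn (F a) P

theorem mem_ISet_iff_represents {ι κ : Type} {A : ι → κ → ℚ} {p : Ultrafilter ℕ+} :
    p ∈ ISet A ↔ Represents p (mulVecQ A) :=
  Iff.rfl

theorem mem_umul_iff {p q : Ultrafilter ℕ+} {U : Set ℕ+} :
    U ∈ umul p q ↔ {x | {y | x * y ∈ U} ∈ q} ∈ p :=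
  Iff.rfl

namespace Represents

protected theorem umul {α β ι κ : Type} [Finite ι] {F : α → ι → ℚ} {G : β → κ → ℚ}
    {p q : Ultrafilter ℕ+} (hp : Represents p F) (hq : Represents q G) :
    Represents (umul p q) fun (c : α × β) (k : ι × κ) => F c.1 k.1 * G c.2 k.2 := by
  intro U hU
  obtain ⟨a, ha⟩ := hp _ (mem_umul_iff.1 hU)
  choose n hnU hFn using ha
  have h_inter : (⋂ i, {y | n i * y ∈ U}) ∈ (q : Filter ℕ+) := Filter.iInter_mem.2 hnU
  obtain ⟨b, hb⟩ := hq _ h_inter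
  refine ⟨(a, b), fun (i, j) => ?_⟩
  obtain ⟨l, hl, hGl⟩ := hb j
  exact ⟨n i * l, Set.mem_iInter.1 hl i, by simp only [hFn, hGl, PNat.mul_coe, Nat.cast_mul]⟩

theorem upow_succ {p : Ultrafilter ℕ+} {k : ℕ} {α ι : Fin (k + 1) → Type} [∀ i, Finite (ι i)]
    {F : ∀ i, α i → ι i → ℚ} (hp : ∀ i, Represents p (F i)) :
    Represents (upow p (k + 1)) fun (a : ∀ i, α i) (f : ∀ i, ι i) => ∏ i, F i (a i) (f i) := by
  induction k with
  | zero =>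
    intro U hU
    obtain ⟨a, ha⟩ := hp 0 U hU
    exact ⟨Fin.cons a finZeroElim, fun f => by simpa using ha (f 0)⟩
  | succ k ih =>
    intro U hU
    have h_init := ih fun i : Fin (k + 1) => hp i.castSucc
    obtain ⟨⟨a, b⟩, hab⟩ := h_init.umul (hp (Fin.last _)) U hU
    refine ⟨Fin.snoc a b, fun f => ?_⟩
    simpa only [Fin.prod_univ_castSucc, Fin.snoc_castSucc, Fin.snoc_last] using
      hab (fun i => f i.castSucc, f (Fin.last _))

end Represents

theorem stmt_14_general {m : ℕ} (hm : 0 < m) {ι κ : Fin m → Type} [∀ i, Finite (ι i)]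
    {α β : Type} {A : ∀ i, ι i → κ i → ℚ} {B : α → β → ℚ} {p q : Ultrafilter ℕ+}
    (hp : ∀ i, p ∈ ISet (A i)) (hq : q ∈ ISet B) {U : Set ℕ+} (hU : U ∈ umul (upow p m) q) :
    ∃ (x : ∀ i, κ i → ℕ+) (x' : β → ℕ+),
      ∀ (f : ∀ i, ι i) (i' : α), ∃ n ∈ U,
        (∏ i, mulVecQ (A i) (x i) (f i)) * mulVecQ B x' i' = ((n : ℕ) : ℚ) := by
  obtain ⟨k, rfl⟩ := Nat.exists_eq_succ_of_ne_zero hm.ne'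
  have h_pow := Represents.upow_succ fun i => mem_ISet_iff_represents.1 (hp i)
  obtain ⟨⟨x, x'⟩, hx⟩ := h_pow.umul (mem_ISet_iff_represents.1 hq) U hU
  exact ⟨x, x', fun f i' => hx (f, i')⟩

/-- Lemma 3.12: let `A 0, …, A (m-1)` be finite image partition
regular matrices and `B` an infinite (`ω×ω`, row-finite) image partition regular
matrix.  If `U ∈ p^m · q` with `p ∈ I = ⋂_{A ∈ ℱ} I(A)` and `q ∈ I(B)`, then
there are `x i ∈ ℕ^{v i}` and `x' ∈ ℕ^ω` with
`P(A 0 (x 0), …, A (m-1) (x (m-1)), B x') ⊆ U`. -/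
theorem stmt_14 (m : ℕ) (hm : 0 < m) (u v : Fin m → ℕ)
    (A : ∀ i, Fin (u i) → Fin (v i) → ℚ) (hA : ∀ i, IPR (A i))
    (B : ℕ → ℕ → ℚ) (hBrow : ∀ i, {j | B i j ≠ 0}.Finite) (hB : IPR B)
    (p q : Ultrafilter ℕ+)
    (hp : ∀ (u' v' : ℕ) (C : Fin u' → Fin v' → ℚ), IPR C → p ∈ ISet C)
    (hq : q ∈ ISet B)
    (U : Set ℕ+) (hU : U ∈ umul (upow p m) q) :
    ∃ (x : ∀ i, Fin (v i) → ℕ+) (x' : ℕ → ℕ+),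
      ∀ (f : ∀ i, Fin (u i)) (i' : ℕ), ∃ n ∈ U,
        (∏ i, mulVecQ (A i) (x i) (f i)) * mulVecQ B x' i' = ((n : ℕ) : ℚ) :=
  stmt_14_general hm (fun i => hp _ _ (A i) (hA i)) hq hU
end
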